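/- Let G be a branch group acting on a rooted tree T and let K be a non-trivial normal subgroup of G. Then the quotient group G/K is virtually abelian, i.e. G/K has an abelian subgroup of finite index. -/

import Mathlib

/-!  Common definitions: rooted trees of type `(m n)`, tree automorphisms,
rigid stabilizers, branch groups, and auxiliary notions. -/

universe u

/-- Vertices of the rooted tree of type `m`: finite sequences `(x_0, …, x_{n-1})`
with `x_i ∈ {1, …, m i}` (encoded as `Fin (m i)`). -/
def Vertex (m : ℕ → ℕ) : Type := Σ n : ℕ, ∀ i : Fin n, Fin (m i)

namespace Vertex

variable {m : ℕ → ℕ}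

/-- The level of a vertex: its length. -/
def level (v : Vertex m) : ℕ := v.1

/-- `v` is a (weak) prefix of `w`; i.e. `w` lies in the subtree `T_v`
(`w = v` or `w` is a descendant of `v`). -/
def IsPrefix (v w : Vertex m) : Prop :=
  ∃ h : v.1 ≤ w.1, ∀ i : Fin v.1, w.2 (Fin.castLE h i) = v.2 i

/-- `w` is a child (one-step extension) of `v`. -/
def IsChild (v w : Vertex m) : Prop := w.1 = v.1 + 1 ∧ IsPrefix v w

end Vertex

/-- The `n`-th layer `L_n` of the tree: all vertices of level `n`. -/
def layer (m : ℕ → ℕ) (n : ℕ) : Set (Vertex m) := {v | v.1 = n}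

section Rist

variable {m : ℕ → ℕ} (G : Type*) [Group G] [MulAction G (Vertex m)]

/-- The rigid stabilizer of a vertex `v`: all elements fixing every vertex
outside the subtree `T_v`. -/
def rist (v : Vertex m) : Subgroup G :=
  ⨅ w ∈ {w : Vertex m | ¬ Vertex.IsPrefix v w}, MulAction.stabilizer G w

/-- The subgroup generated by the rigid stabilizers of the vertices in `X`. -/
def ristSet (X : Set (Vertex m)) : Subgroup G := ⨆ v ∈ X, rist G v

/-- `rist_G(n)`, the rigid stabilizer of the `n`-th layer. -/
def ristLayer (m : ℕ → ℕ) (G : Type*) [Group G] [MulAction G (Vertex m)] (n : ℕ) :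
    Subgroup G :=
  ristSet G (layer m n)

/-- The orbit of the vertex `v` under a subgroup `H ≤ G`. -/
def subOrbit (H : Subgroup G) (v : Vertex m) : Set (Vertex m) :=
  {w | ∃ h ∈ H, h • v = w}

/-- The set of orbits of a subgroup `H ≤ G` on a set `X` of vertices. -/
def orbitsOn (H : Subgroup G) (X : Set (Vertex m)) : Set (Set (Vertex m)) :=
  (fun v => subOrbit G H v) '' X

end Rist

/-- `G` is a branch group on the rooted tree of type `m` (with respect to the given
action): the action is faithful and by tree automorphisms, `G` acts transitively on
each layer, and each `rist_G(n)` has finite index in `G`. -/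
structure IsBranchGroup (m : ℕ → ℕ) (G : Type*) [Group G] [MulAction G (Vertex m)] :
    Prop where
  faithful : ∀ g : G, (∀ v : Vertex m, g • v = v) → g = 1
  aut : ∀ (g : G) (v w : Vertex m), Vertex.IsChild v w ↔ Vertex.IsChild (g • v) (g • w)
  trans : ∀ v w : Vertex m, v.1 = w.1 → ∃ g : G, g • v = w
  ristFiniteIndex : ∀ n : ℕ, (ristLayer m G n).FiniteIndex

/-- A group is virtually soluble if it has a soluble subgroup of finite index. -/
def VirtuallySolvable (Γ : Type*) [Group Γ] : Prop :=
  ∃ S : Subgroup Γ, S.FiniteIndex ∧ IsSolvable ↥S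

/-- A group is virtually abelian if it has an abelian subgroup of finite index. -/
def VirtuallyAbelian (Γ : Type*) [Group Γ] : Prop :=
  ∃ S : Subgroup Γ, S.FiniteIndex ∧ ∀ a ∈ S, ∀ b ∈ S, a * b = b * a

/-- For subgroups `A ≤ B` of a group with `A` normalised by `B`, this says that the
factor `B/A` belongs to the class `𝔛`. -/
def FactorIn (𝔛 : (Γ : Type u) → [inst : Group Γ] → Prop) {G : Type u} [Group G]
    (A B : Subgroup G) : Prop :=
  ∃ hn : (A.subgroupOf B).Normal, letI := hn; 𝔛 (↥B ⧸ A.subgroupOf B)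

/-- The factor `B/A` is virtually soluble. -/
def FactorVirtuallySolvable {G : Type*} [Group G] (A B : Subgroup G) : Prop :=
  ∃ hn : (A.subgroupOf B).Normal,
    letI := hn; VirtuallySolvable (↥B ⧸ A.subgroupOf B)

/-- The factor `B/A` is virtually abelian. -/
def FactorVirtuallyAbelian {G : Type*} [Group G] (A B : Subgroup G) : Prop :=
  ∃ hn : (A.subgroupOf B).Normal,
    letI := hn; VirtuallyAbelian (↥B ⧸ A.subgroupOf B)

/-- `Γ` has `r` infinite normal subgroups that generate their direct product in `Γ`:
each of them intersects trivially the subgroup generated by the others. -/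
def HasIndepFamily (Γ : Type*) [Group Γ] (r : ℕ) : Prop :=
  ∃ N : Fin r → Subgroup Γ, (∀ i, (N i).Normal) ∧ (∀ i, Infinite ↥(N i)) ∧
    ∀ i, N i ⊓ (⨆ j ∈ ({i}ᶜ : Set (Fin r)), N j) = ⊥

/-!
The subtrees hanging at a fixed level are permuted by `G`, so the subtree `T_v` is a block of the
action on vertices, and rigid stabilizers of distinct vertices of one level commute. Choose `v` and
`k ∈ K` with `k • v ≠ v`. In `G / K`, conjugation by `g` agrees with conjugation by `k * g`, and one
of `g`, `k * g` moves `v`. Hence the image of `rist v` commutes with all its conjugates, itself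
included, and its normal closure, which is the image of the finite-index subgroup generated by the
rigid stabilizers of the level, is abelian.
-/

open MulAction Subgroup
open scoped Pointwise

section GroupTheory

variable {G : Type*} [Group G]

theorem isMulCommutative_normalClosure {s : Set G}
    (hs : ∀ a ∈ s, ∀ b ∈ s, ∀ g : G, Commute a (g * b * g⁻¹)) :
    IsMulCommutative (normalClosure s) := by
  refine isMulCommutative_closure fun x hx y hy => ?_
  obtain ⟨a, ha, hax⟩ := Group.mem_conjugatesOfSet_iff.1 hx
  obtain ⟨b, hb, hby⟩ := Group.mem_conjugatesOfSet_iff.1 hy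
  obtain ⟨c, rfl⟩ := isConj_iff.1 hax
  obtain ⟨d, rfl⟩ := isConj_iff.1 hby
  have hconj : d * b * d⁻¹ = c * ((c⁻¹ * d) * b * (c⁻¹ * d)⁻¹) * c⁻¹ := by group
  rw [hconj]
  exact (Commute.conj_iff c).2 (hs a ha b hb (c⁻¹ * d))

theorem finiteIndex_map_of_surjective {H : Type*} [Group H] {f : G →* H}
    (hf : Function.Surjective f) (A : Subgroup G) [A.FiniteIndex] : (A.map f).FiniteIndex :=
  ⟨ne_zero_of_dvd_ne_zero FiniteIndex.index_ne_zero (A.index_map_dvd hf)⟩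

theorem virtuallyAbelian_of_isMulCommutative (A : Subgroup G) [A.FiniteIndex]
    [IsMulCommutative A] : VirtuallyAbelian G :=
  ⟨A, inferInstance, fun _ ha _ hb => setLike_mul_comm ha hb⟩

theorem virtuallyAbelian_quotient_of_commute_conj {K : Subgroup G} [K.Normal] {s : Set G}
    [(normalClosure s).FiniteIndex]
    (hs : ∀ g : G, ∃ k ∈ K, ∀ a ∈ s, ∀ b ∈ s, Commute a (k * g * b * (k * g)⁻¹)) :
    VirtuallyAbelian (G ⧸ K) := by
  let π := QuotientGroup.mk' K
  have hπ : Function.Surjective π := QuotientGroup.mk'_surjective K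
  have hcomm : IsMulCommutative ((normalClosure s).map π) := by
    rw [map_normalClosure s π hπ]
    refine isMulCommutative_normalClosure ?_
    rintro _ ⟨a, ha, rfl⟩ _ ⟨b, hb, rfl⟩ x
    obtain ⟨g, rfl⟩ := hπ x
    obtain ⟨k, hk, hkg⟩ := hs g
    have hπk : π k = 1 := (QuotientGroup.eq_one_iff k).2 hk
    simpa only [map_mul, map_inv, hπk, one_mul] using (hkg a ha b hb).map π
  have := finiteIndex_map_of_surjective hπ (normalClosure s)
  exact virtuallyAbelian_of_isMulCommutative ((normalClosure s).map π)

end GroupTheory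

section GroupAction

variable {G α : Type*} [Group G] [MulAction G α]

theorem exists_mem_smul_ne_of_ne_bot [FaithfulSMul G α] {K : Subgroup G} (hK : K ≠ ⊥) :
    ∃ k ∈ K, ∃ x : α, k • x ≠ x := by
  obtain ⟨k, hk, hk1⟩ := K.bot_or_exists_ne_one.resolve_left hK
  by_contra! hfix
  exact hk1 (FaithfulSMul.eq_of_smul_eq_smul fun x : α => by rw [hfix k hk x, one_smul])

theorem commute_of_mem_fixingSubgroup_compl [FaithfulSMul G α] {U V : Set α} (hUV : Disjoint U V)
    {a b : G} (ha : a ∈ fixingSubgroup G Uᶜ) (hb : b ∈ fixingSubgroup G Vᶜ) : Commute a b := by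
  rw [mem_fixingSubgroup_iff] at ha hb
  have hdisj : (toPermHom G α a).Disjoint (toPermHom G α b) := fun x =>
    (em (x ∈ U)).symm.imp (ha x) fun hx => hb x (hUV.notMem_of_mem_left hx)
  exact Commute.of_map toPerm_injective hdisj.commute

theorem quotient_by_normal_virtually_abelian_general [FaithfulSMul G α] {U : Set α}
    (hU : IsBlock G U) [(normalClosure (fixingSubgroup G Uᶜ : Set G)).FiniteIndex]
    (K : Subgroup G) [K.Normal] (hK : ∃ k ∈ K, k • U ≠ U) : VirtuallyAbelian (G ⧸ K) := by
  obtain ⟨k, hk, hkU⟩ := hK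
  have hmove (g : G) : ∃ k ∈ K, (k * g) • U ≠ U := by
    by_cases hg : g • U = U
    · exact ⟨k, hk, by rwa [mul_smul, hg]⟩
    · exact ⟨1, K.one_mem, by rwa [one_mul]⟩
  refine virtuallyAbelian_quotient_of_commute_conj (s := fixingSubgroup G Uᶜ) fun g => ?_
  obtain ⟨k, hk, hkg⟩ := hmove g
  refine ⟨k, hk, fun a ha b hb => ?_⟩
  have hdisj : Disjoint U ((k * g) • U) := (isBlock_iff_disjoint_smul_of_ne.1 hU hkg).symm
  exact commute_of_mem_fixingSubgroup_compl hdisj ha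
    (Set.conj_mem_fixingSubgroup (Set.smul_set_compl ..) hb)

end GroupAction

namespace Vertex

variable {m : ℕ → ℕ}

/-- The subtree `T_v` of the vertices having `v` as a weak prefix, so that `rist v` consists of the
elements fixing its complement. -/
def subtree (v : Vertex m) : Set (Vertex m) := {w | IsPrefix v w}

theorem mem_subtree {v w : Vertex m} : w ∈ v.subtree ↔ IsPrefix v w := Iff.rfl

/-- The prefix of length `n` of a vertex `w` of level at least `n`; for growing `n` these form the
path of children from the root to `w`. -/
def take (w : Vertex m) (n : ℕ) (hn : n ≤ w.1) : Vertex m :=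
  ⟨n, fun i => w.2 (Fin.castLE hn i)⟩

theorem IsPrefix.refl (v : Vertex m) : IsPrefix v v := ⟨le_rfl, fun _ => rfl⟩

theorem IsPrefix.trans {u v w : Vertex m} : IsPrefix u v → IsPrefix v w → IsPrefix u w :=
  fun ⟨huv, hu⟩ ⟨hvw, hv⟩ => ⟨huv.trans hvw, fun i => (hv (Fin.castLE huv i)).trans (hu i)⟩

theorem IsPrefix.take_eq {v w : Vertex m} (h : IsPrefix v w) : w.take v.1 h.1 = v :=
  Sigma.ext rfl (heq_of_eq (funext h.2))

theorem IsPrefix.eq_of_level_eq {u v w : Vertex m} (hu : IsPrefix u w) (hv : IsPrefix v w)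
    (huv : u.1 = v.1) : u = v := by
  rw [← hu.take_eq, ← hv.take_eq]
  simp only [huv]

theorem isChild_take (w : Vertex m) {n : ℕ} (hn : w.1 = n + 1) :
    IsChild (w.take n (by omega)) w :=
  ⟨hn, (Nat.le_succ n).trans hn.ge, fun _ => rfl⟩

theorem reflTransGen_isChild_take (w : Vertex m) {k n : ℕ} (hkn : k ≤ n) (hn : n ≤ w.1) :
    Relation.ReflTransGen IsChild (w.take k (hkn.trans hn)) (w.take n hn) := by
  induction hkn with
  | refl => exact .refl
  | step _ ih => exact (ih (Nat.le_of_succ_le hn)).tail (isChild_take (w.take _ hn) rfl)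

theorem isPrefix_iff_reflTransGen_isChild {v w : Vertex m} :
    IsPrefix v w ↔ Relation.ReflTransGen IsChild v w := by
  refine ⟨fun h => ?_, fun h => ?_⟩
  · rw [← h.take_eq]
    exact reflTransGen_isChild_take w h.1 le_rfl
  · induction h with
    | refl => exact .refl v
    | tail _ hchild ih => exact ih.trans hchild.2

end Vertex

open Vertex

/-- `G` acts on the tree of type `m` by automorphisms. Only one implication is demanded for the
child relation, as the converse follows by acting with the inverse. -/
def ActsByTreeAut (m : ℕ → ℕ) (G : Type*) [Group G] [MulAction G (Vertex m)] : Prop :=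
  ∀ (g : G) (v w : Vertex m), IsChild v w → IsChild (g • v) (g • w)

section TreeAction

variable {m : ℕ → ℕ} {G : Type*} [Group G] [MulAction G (Vertex m)]

namespace ActsByTreeAut

theorem level_le_level_smul (hG : ActsByTreeAut m G) (g : G) (v : Vertex m) :
    v.1 ≤ (g • v).1 := by
  induction hn : v.1 generalizing v with
  | zero => exact Nat.zero_le _
  | succ n ih =>
    rw [(hG g _ _ (isChild_take v hn)).1]
    exact Nat.succ_le_succ (ih _ rfl)

theorem level_smul (hG : ActsByTreeAut m G) (g : G) (v : Vertex m) : (g • v).1 = v.1 :=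
  le_antisymm (by simpa only [inv_smul_smul] using hG.level_le_level_smul g⁻¹ (g • v))
    (hG.level_le_level_smul g v)

theorem isPrefix_smul (hG : ActsByTreeAut m G) (g : G) {v w : Vertex m} (h : IsPrefix v w) :
    IsPrefix (g • v) (g • w) := by
  rw [isPrefix_iff_reflTransGen_isChild] at h ⊢
  exact h.lift (g • ·) (hG g)

theorem smul_subtree (hG : ActsByTreeAut m G) (g : G) (v : Vertex m) :
    g • v.subtree = (g • v).subtree := by
  ext w
  rw [Set.mem_smul_set_iff_inv_smul_mem, mem_subtree, mem_subtree]
  exact ⟨fun h => by simpa only [smul_inv_smul] using hG.isPrefix_smul g h,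
    fun h => by simpa only [inv_smul_smul] using hG.isPrefix_smul g⁻¹ h⟩

theorem smul_eq_of_isPrefix (hG : ActsByTreeAut m G) {g : G} {v w : Vertex m}
    (hv : IsPrefix v w) (hgv : IsPrefix (g • v) w) : g • v = v :=
  hgv.eq_of_level_eq hv (hG.level_smul g v)

theorem smul_subtree_eq_iff (hG : ActsByTreeAut m G) {g : G} {v : Vertex m} :
    g • v.subtree = v.subtree ↔ g • v = v := by
  rw [hG.smul_subtree]
  refine ⟨fun h => ?_, fun h => by rw [h]⟩
  have hmem : IsPrefix v (g • v) := h.subset (IsPrefix.refl (g • v))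
  exact hG.smul_eq_of_isPrefix hmem (.refl _)

theorem isBlock_subtree (hG : ActsByTreeAut m G) (v : Vertex m) : IsBlock G v.subtree :=
  isBlock_iff_smul_eq_of_mem.2 fun g _ ha hga =>
    hG.smul_subtree_eq_iff.2 (hG.smul_eq_of_isPrefix hga (hG.isPrefix_smul g ha))

end ActsByTreeAut

theorem rist_eq_fixingSubgroup (v : Vertex m) : rist G v = fixingSubgroup G v.subtreeᶜ := by
  ext g
  simp only [rist, mem_iInf, mem_stabilizer_iff, mem_fixingSubgroup_iff, Set.mem_ofPred_eq,
    Set.mem_compl_iff, mem_subtree]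

theorem ActsByTreeAut.rist_smul_le_normalClosure (hG : ActsByTreeAut m G) (g : G) (v : Vertex m) :
    rist G (g • v) ≤ normalClosure (rist G v : Set G) := by
  have hconj : (rist G v).map (MulAut.conj g).toMonoidHom = rist G (g • v) := by
    simp only [rist_eq_fixingSubgroup, ← hG.smul_subtree]
    exact SubMulAction.fixingSubgroup_map_conj_eq Set.smul_set_compl
  rw [← hconj, map_le_iff_le_comap]
  exact fun a ha => normalClosure_normal.conj_mem a (subset_normalClosure ha) g

namespace IsBranchGroup

theorem actsByTreeAut (hG : IsBranchGroup m G) : ActsByTreeAut m G :=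
  fun g v w => (hG.aut g v w).1

theorem faithfulSMul (hG : IsBranchGroup m G) : FaithfulSMul G (Vertex m) :=
  faithfulSMul_iff.2 hG.faithful

theorem finiteIndex_normalClosure_rist (hG : IsBranchGroup m G) (v : Vertex m) :
    (normalClosure (rist G v : Set G)).FiniteIndex := by
  have := hG.ristFiniteIndex v.1
  refine finiteIndex_of_le (H := ristLayer m G v.1) (iSup₂_le fun w hw => ?_)
  obtain ⟨g, rfl⟩ := hG.trans v w (Eq.symm hw)
  exact hG.actsByTreeAut.rist_smul_le_normalClosure g v

end IsBranchGroup

end TreeAction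

/-- **Theorem.** If `G` is a branch group acting on a rooted tree `T` and `K` is a
non-trivial normal subgroup of `G`, then the quotient `G/K` is virtually abelian. -/
theorem quotient_by_normal_virtually_abelian
    (m : ℕ → ℕ) (hm : ∀ n, 2 ≤ m n)
    (G : Type*) [Group G] [MulAction G (Vertex m)] (hG : IsBranchGroup m G)
    (K : Subgroup G) [K.Normal] (hK : K ≠ ⊥) :
    ∃ A : Subgroup (G ⧸ K), A.FiniteIndex ∧ ∀ a ∈ A, ∀ b ∈ A, a * b = b * a := by
  have := hG.faithfulSMul
  obtain ⟨k, hk, v, hkv⟩ := exists_mem_smul_ne_of_ne_bot (α := Vertex m) hK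
  have hfin := hG.finiteIndex_normalClosure_rist v
  rw [rist_eq_fixingSubgroup] at hfin
  exact quotient_by_normal_virtually_abelian_general (hG.actsByTreeAut.isBlock_subtree v) K
    ⟨k, hk, mt hG.actsByTreeAut.smul_subtree_eq_iff.1 hkv⟩
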